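/- Positivity of the limiting Betti number: fix integers 0 ≤ q < d and t ∈ [0,1], and let P be a stationary and ergodic probability measure on Ω = [0,1]^{K^d}. If there exists a positive integer K with P(Ω_q(0,K,t)) > 0, then β̂_q(t) > 0, where β̂_q(t) := limsup_{n→∞} |Λ_n|^{−1} E[β_q^n(t)]. In fact β̂_q(t) ≥ (2K+2)^{−d} P(Ω_q(0,K,t)). -/

import Mathlib

open MeasureTheory Filter Topology

noncomputable section

/-- An elementary cube in `ℝ^d`: the `i`-th component is the elementary interval
`[l, l+1]` if the Boolean is `true` (nondegenerate) and `[l, l]` if `false` (degenerate). -/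
abbrev ElemCube (d : ℕ) := Fin d → ℤ × Bool

/-- The dimension of an elementary cube: the number of nondegenerate components. -/
def cubeDim {d : ℕ} (Q : ElemCube d) : ℕ :=
  (Finset.univ.filter fun i => (Q i).2 = true).card

/-- The geometric realization of an elementary cube as a subset of `ℝ^d`. -/
def cubeSet {d : ℕ} (Q : ElemCube d) : Set (Fin d → ℝ) :=
  {x | ∀ i, x i ∈ Set.Icc ((Q i).1 : ℝ) ((Q i).1 + (if (Q i).2 then 1 else 0))}

/-- A cubical set is a union of elementary cubes. -/
def IsCubical {d : ℕ} (X : Set (Fin d → ℝ)) : Prop :=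
  ∃ S : Set (ElemCube d), X = ⋃ Q ∈ S, cubeSet Q

/-- The free `ℤ`-module generated by all elementary cubes of `ℝ^d` (all dimensions mixed). -/
abbrev CubChain (d : ℕ) := ElemCube d →₀ ℤ

/-- The cubical boundary of a single elementary cube, defined by induction on the ambient
dimension, following the inductive definition: in `ℝ¹`, `∂ [l,l+1]^ = [l+1]^ - [l]^` and
`∂ Q̂ = 0` for degenerate `Q`; and for `Q = I × P`,
`∂ Q̂ = (∂ Î) ⋄ P̂ + (-1)^(dim I) Î ⋄ (∂ P̂)`, where `⋄` is the cubical product. -/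
def boundaryCube : (d : ℕ) → ElemCube d → CubChain d
  | 0, _ => 0
  | d + 1, Q =>
      (if (Q 0).2 then
          Finsupp.single (Fin.cons ((Q 0).1 + 1, false) (fun i => Q i.succ)) (1 : ℤ)
            - Finsupp.single (Fin.cons ((Q 0).1, false) (fun i => Q i.succ)) (1 : ℤ)
        else 0)
      + (if (Q 0).2 then (-1 : ℤ) else 1) •
          (boundaryCube d (fun i => Q i.succ)).sum
            (fun R n => Finsupp.single (Fin.cons (Q 0) R) n)

/-- The cubical boundary operator, the `ℤ`-linear extension of `boundaryCube`. -/
def boundaryHom (d : ℕ) : CubChain d →ₗ[ℤ] CubChain d :=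
  Finsupp.lsum ℤ fun Q => LinearMap.toSpanSingleton ℤ (CubChain d) (boundaryCube d Q)

/-- `C_k^d(X)`: the submodule of chains supported on the `k`-dimensional elementary cubes
contained in `X`. -/
def chainsOn (d k : ℕ) (X : Set (Fin d → ℝ)) : Submodule ℤ (CubChain d) :=
  Finsupp.supported ℤ ℤ {Q : ElemCube d | cubeDim Q = k ∧ cubeSet Q ⊆ X}

/-- `Z_q(X) = ker ∂_q^X`, the cycles of the cubical set `X` in degree `q`. -/
def cycleMod (d q : ℕ) (X : Set (Fin d → ℝ)) : Submodule ℤ (CubChain d) :=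
  chainsOn d q X ⊓ LinearMap.ker (boundaryHom d)

/-- `B_q(X) = im ∂_{q+1}^X`, the boundaries of the cubical set `X` in degree `q`. -/
def boundaryMod (d q : ℕ) (X : Set (Fin d → ℝ)) : Submodule ℤ (CubChain d) :=
  Submodule.map (boundaryHom d) (chainsOn d (q + 1) X)

/-- The `q`-th Betti number of a cubical set: the rank of the free part of the `q`-th
cubical homology `H_q(X) = Z_q(X) / B_q(X)`. -/
def betti (d q : ℕ) (X : Set (Fin d → ℝ)) : ℕ :=
  Module.finrank ℤ
    (↥(cycleMod d q X) ⧸ (boundaryMod d q X).comap (cycleMod d q X).subtype)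

/-- `Λ_n = [-n, n]^d ⊆ ℝ^d`. -/
def lambda (d n : ℕ) : Set (Fin d → ℝ) := {x | ∀ i, x i ∈ Set.Icc (-(n : ℝ)) n}

/-- The configuration space `Ω = [0,1]^{K^d}` with the product σ-field. -/
abbrev Config (d : ℕ) := ElemCube d → unitInterval

/-- Translation of an elementary cube by `x ∈ ℤ^d`. -/
def translateCube {d : ℕ} (x : Fin d → ℤ) (Q : ElemCube d) : ElemCube d :=
  fun i => ((Q i).1 + x i, (Q i).2)

/-- The translation action `τ_x` on configurations: `(τ_x ω)_Q = ω_{-x+Q}`. -/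
def configShift {d : ℕ} (x : Fin d → ℤ) (ω : Config d) : Config d :=
  fun Q => ω (translateCube (-x) Q)

/-- Stationarity of a measure on configuration space: `P(τ_x⁻¹ A) = P(A)`. -/
def Stationary {d : ℕ} (P : Measure (Config d)) : Prop :=
  ∀ (x : Fin d → ℤ) (A : Set (Config d)), MeasurableSet A → P (configShift x ⁻¹' A) = P A

/-- Ergodicity of a measure on configuration space under translations. -/
def ErgodicConfig {d : ℕ} (P : Measure (Config d)) : Prop :=
  ∀ A : Set (Config d), MeasurableSet A →
    (∀ x : Fin d → ℤ, configShift x ⁻¹' A = A) → P A = 0 ∨ P A = 1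

/-- The random cubical set `X(t) = ⋃ {Q ∈ K^d : ω_Q ≤ t}`. -/
def cubSet {d : ℕ} (ω : Config d) (t : ℝ) : Set (Fin d → ℝ) :=
  ⋃ Q ∈ {Q : ElemCube d | (ω Q : ℝ) ≤ t}, cubeSet Q

/-- `β_q^n(t)(ω) = β_q(X(t) ∩ Λ_n)`. -/
def bettiN (d q n : ℕ) (t : ℝ) (ω : Config d) : ℕ :=
  betti d q (cubSet ω t ∩ lambda d n)

/-- `β̂_q(t) := limsup_{n → ∞} |Λ_n|⁻¹ E[β_q^n(t)]`, where `|Λ_n| = (2n)^d`. -/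
def betaHat (d q : ℕ) (P : Measure (Config d)) (t : ℝ) : ℝ :=
  limsup (fun n : ℕ => ((2 * (n : ℝ)) ^ d)⁻¹ * ∫ ω, (bettiN d q n t ω : ℝ) ∂P) atTop

/-- `L_{x,K} = {Q ∈ K^d : Q ⊆ x + Λ_K}`, here for `x = 0`:
the elementary cubes contained in `Λ_K`. -/
def cubesIn (d K : ℕ) : Set (ElemCube d) := {Q : ElemCube d | cubeSet Q ⊆ lambda d K}

/-- `X_L(t) = ⋃ {Q ∈ L : ω_Q ≤ t}` for a family `L` of elementary cubes. -/
def cubSetOn {d : ℕ} (L : Set (ElemCube d)) (ω : Config d) (t : ℝ) : Set (Fin d → ℝ) :=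
  ⋃ Q ∈ {Q ∈ L | (ω Q : ℝ) ≤ t}, cubeSet Q

/-- `Ω_q(0,K,t)`: the set of configurations `ω` such that
`β_q(X_L(t)) ≥ 1 + β_q(X_{L \ L_{0,K}}(t))` for every finite `L ⊆ K^d` with `L_{0,K} ⊆ L`. -/
def goodConfigs (d q K : ℕ) (t : ℝ) : Set (Config d) :=
  {ω | ∀ L : Set (ElemCube d), L.Finite → cubesIn d K ⊆ L →
    1 + betti d q (cubSetOn (L \ cubesIn d K) ω t) ≤ betti d q (cubSetOn L ω t)}

lemma rank_compare {M : Type} [AddCommGroup M] (Z Z' B B' S : Submodule ℤ M)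
    (hZ : Z ≤ Z') (hB : B ≤ B') (hS : B' ≤ B ⊔ S) :
    Module.rank ℤ (↥Z ⧸ B.comap Z.subtype) ≤
      Module.rank ℤ (↥Z' ⧸ B'.comap Z'.subtype) + Module.rank ℤ S := by
  let f : (↥Z ⧸ B.comap Z.subtype) →ₗ[ℤ] (↥Z' ⧸ B'.comap Z'.subtype) :=
    Submodule.mapQ _ _ (Submodule.inclusion hZ) (fun x hx => hB hx)
  let g : (↥Z ⧸ B.comap Z.subtype) →ₗ[ℤ] (M ⧸ B) :=
    Submodule.mapQ _ _ Z.subtype le_rfl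
  have hg : Function.Injective g := by
    rw [← LinearMap.ker_eq_bot, LinearMap.ker_eq_bot']
    intro x
    obtain ⟨x, rfl⟩ := Submodule.mkQ_surjective _ x
    intro h
    simpa [g] using h
  rw [← LinearMap.rank_range_add_rank_ker f]
  refine add_le_add (Submodule.rank_le _) ?_
  have h1 : Module.rank ℤ (LinearMap.ker f) = Module.rank ℤ ((LinearMap.ker f).map g) :=
    LinearEquiv.rank_eq (Submodule.equivMapOfInjective g hg _)
  have h2 : (LinearMap.ker f).map g ≤ S.map B.mkQ := by
    rintro _ ⟨x, hx, rfl⟩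
    obtain ⟨x, rfl⟩ := Submodule.mkQ_surjective _ x
    have hx' : (x : M) ∈ B' := by simpa [f] using hx
    obtain ⟨b, hb, s, hs, hbs⟩ := Submodule.mem_sup.1 (hS hx')
    refine ⟨s, hs, ?_⟩
    simp only [g, Submodule.mkQ_apply, Submodule.mapQ_apply, Submodule.subtype_apply]
    rw [Submodule.Quotient.eq, ← hbs]
    simpa using hb
  rw [h1]
  exact (Submodule.rank_mono h2).trans (rank_map_le _ _)

lemma chainsOn_mono {d k : ℕ} {X Y : Set (Fin d → ℝ)} (h : X ⊆ Y) :
    chainsOn d k X ≤ chainsOn d k Y :=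
  Finsupp.supported_mono fun _ hQ => ⟨hQ.1, hQ.2.trans h⟩

lemma chainsOn_finite {d k : ℕ} {X : Set (Fin d → ℝ)} (T : Finset (ElemCube d))
    (hT : ∀ Q, cubeSet Q ⊆ X → Q ∈ T) :
    Module.Finite ℤ (chainsOn d k X) ∧ Module.finrank ℤ (chainsOn d k X) ≤ T.card := by
  have hsub : {Q : ElemCube d | cubeDim Q = k ∧ cubeSet Q ⊆ X} ⊆ (T : Set _) :=
    fun Q hQ => hT Q hQ.2
  have hfin : {Q : ElemCube d | cubeDim Q = k ∧ cubeSet Q ⊆ X}.Finite :=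
    T.finite_toSet.subset hsub
  have := hfin.fintype
  have e := Finsupp.supportedEquivFinsupp (R := ℤ) (M := ℤ)
    {Q : ElemCube d | cubeDim Q = k ∧ cubeSet Q ⊆ X}
  refine ⟨Module.Finite.equiv e.symm, ?_⟩
  unfold chainsOn
  rw [e.finrank_eq, Module.finrank_finsupp_self, ← Set.toFinset_card]
  apply Finset.card_le_card
  intro Q hQ
  exact hsub (by simpa using hQ)

lemma betti_le_card {d q : ℕ} {X : Set (Fin d → ℝ)} (T : Finset (ElemCube d))
    (hT : ∀ Q, cubeSet Q ⊆ X → Q ∈ T) : betti d q X ≤ T.card := by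
  obtain ⟨h1, h2⟩ := chainsOn_finite (k := q) T hT
  have h3 : Module.Finite ℤ (cycleMod d q X) :=
    Module.Finite.of_injective (Submodule.inclusion (inf_le_left : cycleMod d q X ≤ chainsOn d q X))
      (Submodule.inclusion_injective _)
  exact (Submodule.finrank_quotient_le _).trans
    ((Submodule.finrank_mono (inf_le_left : cycleMod d q X ≤ chainsOn d q X)).trans h2)

lemma betti_compare {d q : ℕ} {X Y : Set (Fin d → ℝ)} (hXY : X ⊆ Y)
    (T F : Finset (ElemCube d)) (hT : ∀ Q, cubeSet Q ⊆ Y → Q ∈ T)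
    (hF : ∀ Q, cubeSet Q ⊆ Y → ¬ cubeSet Q ⊆ X → Q ∈ F) :
    betti d q X ≤ betti d q Y + F.card := by
  classical
  obtain ⟨h1, h2⟩ := chainsOn_finite (k := q) T hT
  have h3 : Module.Finite ℤ (cycleMod d q Y) :=
    Module.Finite.of_injective (Submodule.inclusion (inf_le_left : cycleMod d q Y ≤ chainsOn d q Y))
      (Submodule.inclusion_injective _)
  let S : Submodule ℤ (CubChain d) := Submodule.span ℤ (F.image (boundaryCube d) : Finset _)
  have hr := rank_compare (cycleMod d q X) (cycleMod d q Y) (boundaryMod d q X)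
    (boundaryMod d q Y) S (inf_le_inf_right _ (chainsOn_mono hXY))
    (Submodule.map_mono (chainsOn_mono hXY)) (by
      unfold boundaryMod chainsOn
      rw [Finsupp.supported_eq_span_single, Submodule.map_span, Submodule.span_le]
      rintro _ ⟨_, ⟨Q, hQ, rfl⟩, rfl⟩
      by_cases hX : cubeSet Q ⊆ X
      · apply Submodule.mem_sup_left
        refine ⟨_, Finsupp.single_mem_supported ℤ (1 : ℤ) ⟨hQ.1, hX⟩, rfl⟩
      · apply Submodule.mem_sup_right
        apply Submodule.subset_span
        have := Finset.mem_image_of_mem (boundaryCube d) (hF Q hQ.2 hX)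
        simpa [boundaryHom] using this)
  have hS : Module.Finite ℤ S := Module.Finite.span_finset ℤ _
  have hS2 : Module.finrank ℤ S ≤ F.card :=
    (finrank_span_finset_le_card (R := ℤ) (F.image (boundaryCube d))).trans Finset.card_image_le
  rw [← Module.finrank_eq_rank ℤ S, ← Module.finrank_eq_rank ℤ (↥(cycleMod d q Y) ⧸ _)] at hr
  have := Module.finrank_le_of_rank_le (R := ℤ) (n := betti d q Y + Module.finrank ℤ S)
    (by rw [Nat.cast_add]; exact hr)
  exact this.trans (by omega)

lemma betti_congr_equiv {d q : ℕ} {X Y : Set (Fin d → ℝ)} (e : CubChain d ≃ₗ[ℤ] CubChain d)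
    (he : ∀ c, boundaryHom d (e c) = e (boundaryHom d c))
    (hc : ∀ k c, e c ∈ chainsOn d k Y ↔ c ∈ chainsOn d k X) : betti d q X = betti d q Y := by
  have hZ : ∀ c, e c ∈ cycleMod d q Y ↔ c ∈ cycleMod d q X := by
    intro c
    simp [cycleMod, hc, he]
  have hB : ∀ c, e c ∈ boundaryMod d q Y ↔ c ∈ boundaryMod d q X := by
    intro c
    constructor
    · rintro ⟨b, hb, hbc⟩
      refine ⟨e.symm b, ?_, ?_⟩
      · rw [SetLike.mem_coe, ← hc]; simpa using hb
      · apply e.injective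
        rw [← he]; simpa using hbc
    · rintro ⟨b, hb, rfl⟩
      exact ⟨e b, (hc _ _).2 hb, he b⟩
  have hm : (cycleMod d q X).map (e : CubChain d →ₗ[ℤ] CubChain d) = cycleMod d q Y := by
    ext c
    constructor
    · rintro ⟨b, hb, rfl⟩
      exact (hZ b).2 hb
    · intro h
      exact ⟨e.symm c, by rw [SetLike.mem_coe, ← hZ]; simpa using h, by simp⟩
  let e' : cycleMod d q X ≃ₗ[ℤ] cycleMod d q Y := e.ofSubmodules _ _ hm
  have he' : ∀ z, ((e' z : cycleMod d q Y) : CubChain d) = e z := fun z => rfl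
  refine LinearEquiv.finrank_eq (Submodule.Quotient.equiv _ _ e' ?_)
  ext c
  obtain ⟨b, rfl⟩ := e'.surjective c
  simp only [Submodule.mem_comap, Submodule.subtype_apply, he', hB]
  constructor
  · rintro ⟨b', hb', h⟩
    have := e'.injective h
    subst this
    exact hb'
  · intro h
    exact ⟨b, h, rfl⟩

lemma translateCube_neg {d : ℕ} (x : Fin d → ℤ) (Q : ElemCube d) :
    translateCube (-x) (translateCube x Q) = Q := by
  ext i <;> simp [translateCube]

lemma translateCube_neg' {d : ℕ} (x : Fin d → ℤ) (Q : ElemCube d) :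
    translateCube x (translateCube (-x) Q) = Q := by
  ext i <;> simp [translateCube]

def trEquiv {d : ℕ} (x : Fin d → ℤ) : ElemCube d ≃ ElemCube d where
  toFun := translateCube x
  invFun := translateCube (-x)
  left_inv := translateCube_neg x
  right_inv := translateCube_neg' x

lemma translate_cons {d : ℕ} (x : Fin (d + 1) → ℤ) (a : ℤ × Bool) (R : ElemCube d) :
    translateCube x (Fin.cons a R : ElemCube (d + 1)) =
      Fin.cons (a.1 + x 0, a.2) (translateCube (fun i => x i.succ) R) := by
  funext i
  refine Fin.cases ?_ (fun i => ?_) i <;> simp [translateCube]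

lemma boundaryCube_translate : ∀ (d : ℕ) (x : Fin d → ℤ) (Q : ElemCube d),
    boundaryCube d (translateCube x Q) = (boundaryCube d Q).mapDomain (translateCube x)
  | 0, _, _ => by simp [boundaryCube]
  | d + 1, x, Q => by
    have ih := boundaryCube_translate d (fun i => x i.succ) (fun i => Q i.succ)
    have h0 : (fun i : Fin d => translateCube x Q i.succ)
        = translateCube (fun i => x i.succ) (fun i => Q i.succ) := rfl
    have h1 : translateCube x Q 0 = ((Q 0).1 + x 0, (Q 0).2) := rfl
    unfold boundaryCube
    rw [h0, ih, h1, Finsupp.mapDomain_add, Finsupp.mapDomain_smul]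
    congr 1
    · cases (Q 0).2
      · simp
      · simp only [if_true, sub_eq_add_neg, Finsupp.mapDomain_add, Finsupp.mapDomain_single,
          translate_cons, ← Finsupp.single_neg]
        congr 4
        ring
    · congr 1
      rw [Finsupp.sum_mapDomain_index (by simp) (by simp)]
      unfold Finsupp.sum
      rw [Finsupp.mapDomain_finsetSum]
      simp [Finsupp.mapDomain_single, translate_cons]

lemma cubeSet_translate {d : ℕ} (x : Fin d → ℤ) (Q : ElemCube d) (y : Fin d → ℝ) :
    (fun i => y i + (x i : ℝ)) ∈ cubeSet (translateCube x Q) ↔ y ∈ cubeSet Q := by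
  simp only [cubeSet, translateCube, Set.mem_ofPred_eq, Set.mem_Icc]
  refine forall_congr' fun i => ?_
  push_cast
  by_cases hb : (Q i).2 = true <;> simp only [hb, if_true, Bool.false_eq_true, if_false] <;>
  constructor <;> rintro ⟨h1, h2⟩ <;> constructor <;> linarith

lemma cubeSet_translate_subset {d : ℕ} (x : Fin d → ℤ) (Q : ElemCube d) (X : Set (Fin d → ℝ)) :
    cubeSet (translateCube x Q) ⊆ X ↔
      cubeSet Q ⊆ (fun (y : Fin d → ℝ) i => y i + (x i : ℝ)) ⁻¹' X := by
  constructor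
  · intro h y hy
    exact h ((cubeSet_translate x Q y).2 hy)
  · intro h y hy
    have e : y = (fun i => (y i - x i) + (x i : ℝ)) := by funext i; ring
    rw [e] at hy ⊢
    exact h ((cubeSet_translate x Q _).1 hy)

lemma cubeDim_translate {d : ℕ} (x : Fin d → ℤ) (Q : ElemCube d) :
    cubeDim (translateCube x Q) = cubeDim Q := rfl

lemma betti_translate {d q : ℕ} (x : Fin d → ℤ) (X : Set (Fin d → ℝ)) :
    betti d q ((fun (y : Fin d → ℝ) i => y i + (x i : ℝ)) ⁻¹' X) = betti d q X := by
  have hap : ∀ c : CubChain d, Finsupp.domLCongr (R := ℤ) (M := ℤ) (trEquiv x) c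
      = c.mapDomain (translateCube x) := by
    intro c
    simp only [Finsupp.domLCongr_apply, Finsupp.domCongr_apply, Finsupp.equivMapDomain_eq_mapDomain]
    rfl
  refine betti_congr_equiv (Finsupp.domLCongr (trEquiv x)) ?_ ?_
  · intro c
    rw [hap, hap]
    induction c using Finsupp.induction_linear with
    | zero => simp
    | add f g hf hg => simp only [Finsupp.mapDomain_add, map_add, hf, hg]
    | single Q n =>
      simp [boundaryHom, Finsupp.mapDomain_single, boundaryCube_translate, Finsupp.mapDomain_smul]
  · intro k c
    have hinj : Function.Injective (translateCube x) := (trEquiv x).injective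
    rw [hap]
    unfold chainsOn
    rw [Finsupp.mem_supported, Finsupp.mem_supported]
    classical
    rw [Finsupp.mapDomain_support_of_injective hinj, Finset.coe_image, Set.image_subset_iff]
    simp only [Set.preimage_ofPred_eq, cubeDim_translate, cubeSet_translate_subset]

lemma cubeSet_subset_iff {d : ℕ} (Q R : ElemCube d) : cubeSet Q ⊆ cubeSet R ↔
    ∀ i, (R i).1 ≤ (Q i).1 ∧
      (Q i).1 + (if (Q i).2 then 1 else 0) ≤ (R i).1 + (if (R i).2 then 1 else 0) := by
  constructor
  · intro h i
    have h1 : (fun i => ((Q i).1 : ℝ)) ∈ cubeSet Q := by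
      intro i; constructor
      · exact le_rfl
      · simp only []; split_ifs <;> linarith
    have h2 : (fun i => ((Q i).1 : ℝ) + (if (Q i).2 then 1 else 0)) ∈ cubeSet Q := by
      intro i; constructor
      · simp only []; split_ifs <;> linarith
      · exact le_rfl
    have h3 := (h h1 i).1
    have h4 := (h h2 i).2
    constructor
    · exact_mod_cast h3
    · split_ifs at h4 ⊢ <;> exact_mod_cast h4
  · intro h x hx i
    obtain ⟨h1, h2⟩ := h i
    obtain ⟨h3, h4⟩ := hx i
    have h1' : ((R i).1 : ℝ) ≤ (Q i).1 := by exact_mod_cast h1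
    have h2' : ((Q i).1 : ℝ) + (if (Q i).2 then 1 else 0)
        ≤ (R i).1 + (if (R i).2 then 1 else 0) := by
      split_ifs at h2 ⊢ <;> exact_mod_cast h2
    exact ⟨h1'.trans h3, h4.trans h2'⟩

lemma mem_cubesIn {d n : ℕ} (Q : ElemCube d) : cubeSet Q ⊆ lambda d n ↔
    ∀ i, -(n : ℤ) ≤ (Q i).1 ∧ (Q i).1 + (if (Q i).2 then 1 else 0) ≤ n := by
  constructor
  · intro h i
    have h1 : (fun i => ((Q i).1 : ℝ)) ∈ cubeSet Q := by
      intro i; constructor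
      · exact le_rfl
      · simp only []; split_ifs <;> linarith
    have h2 : (fun i => ((Q i).1 : ℝ) + (if (Q i).2 then 1 else 0)) ∈ cubeSet Q := by
      intro i; constructor
      · simp only []; split_ifs <;> linarith
      · exact le_rfl
    have h3 := (h h1 i).1
    have h4 := (h h2 i).2
    constructor
    · exact_mod_cast h3
    · split_ifs at h4 ⊢ <;> exact_mod_cast h4
  · intro h x hx i
    obtain ⟨h1, h2⟩ := h i
    obtain ⟨h3, h4⟩ := hx i
    have h1' : (-(n : ℝ)) ≤ (Q i).1 := by exact_mod_cast h1
    have h2' : ((Q i).1 : ℝ) + (if (Q i).2 then 1 else 0) ≤ n := by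
      split_ifs at h2 ⊢ <;> exact_mod_cast h2
    exact ⟨h1'.trans h3, h4.trans h2'⟩

/-- if a cube is covered by a family of cubes, it lies in one of them -/
lemma exists_subset_of_subset_iUnion {d : ℕ} (Q : ElemCube d) (S : Set (ElemCube d))
    (h : cubeSet Q ⊆ ⋃ R ∈ S, cubeSet R) : ∃ R ∈ S, cubeSet Q ⊆ cubeSet R := by
  have h1 : (fun i => ((Q i).1 : ℝ) + (if (Q i).2 then 1 / 2 else 0)) ∈ cubeSet Q := by
    intro i; constructor <;> simp only [] <;> split_ifs <;> norm_num
  obtain ⟨R, hR, hx⟩ := Set.mem_iUnion₂.1 (h h1)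
  refine ⟨R, hR, (cubeSet_subset_iff _ _).2 fun i => ?_⟩
  obtain ⟨h3, h4⟩ := hx i
  simp only [] at h3 h4
  have a1 : (R i).1 < (Q i).1 + 1 := by
    have : ((R i).1 : ℝ) < (Q i).1 + 1 := by split_ifs at h3 <;> linarith
    exact_mod_cast this
  refine ⟨by omega, ?_⟩
  split_ifs at h3 h4 ⊢ with hq hr hr
  · have : ((Q i).1 : ℝ) < (R i).1 + 1 := by linarith
    have : (Q i).1 < (R i).1 + 1 := by exact_mod_cast this
    omega
  · exfalso
    have h5 : ((Q i).1 : ℝ) < (R i).1 := by linarith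
    have : (Q i).1 < (R i).1 := by exact_mod_cast h5
    omega
  · have : ((Q i).1 : ℝ) ≤ (R i).1 + 1 := by linarith
    exact_mod_cast (by linarith : ((Q i).1 : ℝ) + 0 ≤ (R i).1 + 1)
  · exact_mod_cast h4

def box (d n : ℕ) : Finset (ElemCube d) :=
  Fintype.piFinset fun _ => Finset.Icc (-(n : ℤ)) n ×ˢ Finset.univ

lemma mem_box {d n : ℕ} (Q : ElemCube d) :
    Q ∈ box d n ↔ ∀ i, -(n : ℤ) ≤ (Q i).1 ∧ (Q i).1 ≤ n := by
  simp [box]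

lemma card_box (d n : ℕ) : (box d n).card = (4 * n + 2) ^ d := by
  simp only [box, Fintype.card_piFinset, Finset.card_product, Int.card_Icc, Finset.card_univ,
    Fintype.card_bool, Finset.prod_const, Fintype.card_fin]
  congr 1
  omega

lemma mem_box_of_subset {d n : ℕ} (Q : ElemCube d) (h : cubeSet Q ⊆ lambda d n) :
    Q ∈ box d n := by
  rw [mem_cubesIn] at h
  rw [mem_box]
  intro i
  have := h i
  split_ifs at this <;> omega

lemma cubesIn_finite (d n : ℕ) : (cubesIn d n).Finite :=
  (box d n).finite_toSet.subset fun Q hQ => mem_box_of_subset Q hQ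

lemma box_mono {d m n : ℕ} (h : m ≤ n) : box d m ⊆ box d n := by
  intro Q
  simp only [mem_box]
  intro hQ i
  have := hQ i
  omega

lemma betti_cubSetOn_le {d q n : ℕ} (ω : Config d) (t : ℝ) :
    betti d q (cubSetOn (cubesIn d (n + 1)) ω t)
      ≤ bettiN d q (n + 1) t ω + ((4 * (n + 1) + 2) ^ d - (4 * n + 2) ^ d) := by
  rw [← card_box, ← card_box, ← Finset.card_sdiff_of_subset (box_mono (Nat.le_succ n))]
  refine betti_compare ?_ (box d (n + 1)) _ ?_ ?_
  · intro x hx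
    obtain ⟨Q, hQ, hx⟩ := Set.mem_iUnion₂.1 hx
    exact ⟨Set.mem_iUnion₂.2 ⟨Q, hQ.2, hx⟩, hQ.1 hx⟩
  · intro Q hQ
    exact mem_box_of_subset Q (hQ.trans Set.inter_subset_right)
  · intro Q hQ hn
    have hQn := hQ.trans Set.inter_subset_right
    rw [Finset.mem_sdiff]
    refine ⟨mem_box_of_subset Q hQn, fun hb => hn ?_⟩
    obtain ⟨R, hR, hQR⟩ := exists_subset_of_subset_iUnion Q _ (hQ.trans Set.inter_subset_left)
    refine hQR.trans (Set.subset_biUnion_of_mem (u := cubeSet) (x := R) ⟨?_, hR⟩)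
    rw [cubeSet_subset_iff] at hQR
    rw [mem_box] at hb
    change cubeSet R ⊆ lambda d (n + 1)
    rw [mem_cubesIn]
    intro i
    have := hQR i
    have := hb i
    split_ifs at * <;> push_cast <;> omega

lemma cubSetOn_shift {d : ℕ} (c : Fin d → ℤ) (L : Set (ElemCube d)) (ω : Config d) (t : ℝ) :
    cubSetOn (translateCube c ⁻¹' L) (configShift (-c) ω) t =
      (fun (y : Fin d → ℝ) i => y i + (c i : ℝ)) ⁻¹' (cubSetOn L ω t) := by
  ext y
  simp only [cubSetOn, configShift, neg_neg, Set.mem_preimage, Set.mem_iUnion₂]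
  constructor
  · rintro ⟨Q, hQ, hy⟩
    exact ⟨translateCube c Q, hQ, (cubeSet_translate c Q y).2 hy⟩
  · rintro ⟨Q, hQ, hy⟩
    refine ⟨translateCube (-c) Q, ?_, ?_⟩
    · simpa [translateCube_neg'] using hQ
    · rw [← cubeSet_translate c, translateCube_neg']; exact hy

/-- the block `L_{c,K}` -/
def block (d K : ℕ) (c : Fin d → ℤ) : Set (ElemCube d) := translateCube (-c) ⁻¹' cubesIn d K

lemma good_step {d q K : ℕ} {t : ℝ} {ω : Config d} (c : Fin d → ℤ)
    (hg : configShift (-c) ω ∈ goodConfigs d q K t) (L : Set (ElemCube d)) (hL : L.Finite)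
    (hb : block d K c ⊆ L) :
    1 + betti d q (cubSetOn (L \ block d K c) ω t) ≤ betti d q (cubSetOn L ω t) := by
  have h := hg (translateCube c ⁻¹' L) (hL.preimage (trEquiv c).injective.injOn) (by
    intro Q hQ
    apply hb
    change translateCube (-c) (translateCube c Q) ∈ cubesIn d K
    rwa [translateCube_neg])
  have e : translateCube c ⁻¹' L \ cubesIn d K = translateCube c ⁻¹' (L \ block d K c) := by
    rw [Set.preimage_sdiff]
    congr 1
    ext Q
    simp [block, translateCube_neg]
  rw [e, cubSetOn_shift, cubSetOn_shift, betti_translate, betti_translate] at h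
  exact h

lemma good_many {d q K : ℕ} {t : ℝ} {ω : Config d} {ι : Type} (c : ι → Fin d → ℤ)
    (L : Set (ElemCube d)) (hL : L.Finite) (hb : ∀ j, block d K (c j) ⊆ L)
    (hd : ∀ j j', j ≠ j' → Disjoint (block d K (c j)) (block d K (c j')))
    (J : Finset ι) (hg : ∀ j ∈ J, configShift (-c j) ω ∈ goodConfigs d q K t) :
    J.card + betti d q (cubSetOn (L \ ⋃ j ∈ J, block d K (c j)) ω t)
      ≤ betti d q (cubSetOn L ω t) := by
  classical
  induction J using Finset.induction_on with
  | empty => simp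
  | insert a s ha ih =>
    have ih' := ih fun j hj => hg j (Finset.mem_insert_of_mem hj)
    have h := good_step (c a) (hg a (Finset.mem_insert_self _ _))
      (L \ ⋃ j ∈ s, block d K (c j)) (hL.subset Set.sdiff_subset) (by
        intro Q hQ
        refine ⟨hb a hQ, fun h => ?_⟩
        obtain ⟨j, hj, hQj⟩ := Set.mem_iUnion₂.1 h
        exact Set.disjoint_left.1 (hd a j (by rintro rfl; exact ha hj)) hQ hQj)
    rw [Finset.card_insert_of_notMem ha, Finset.set_biUnion_insert, Set.union_comm,
      ← Set.sdiff_sdiff]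
    omega

def ctr (d K m : ℕ) (j : Fin d → Fin m) : Fin d → ℤ :=
  fun i => -((K + 1) * m : ℤ) + (K + 1) + (2 * K + 2) * (j i : ℕ)

lemma block_sub (d K m : ℕ) (j : Fin d → Fin m) :
    block d K (ctr d K m j) ⊆ cubesIn d ((K + 1) * m) := by
  intro Q hQ
  have hQ' : cubeSet (translateCube (-ctr d K m j) Q) ⊆ lambda d K := hQ
  change cubeSet Q ⊆ _
  rw [mem_cubesIn] at hQ' ⊢
  intro i
  obtain ⟨h1, h2⟩ := hQ' i
  have h2 : (Q i).1 + -(ctr d K m j i) + (if (Q i).2 then 1 else 0) ≤ K := h2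
  simp only [translateCube, Pi.neg_apply] at h1
  simp only [ctr] at h1 h2
  have h3 : ((j i : ℕ) : ℤ) + 1 ≤ m := by exact_mod_cast (j i).2
  have h4 : (0 : ℤ) ≤ ((j i : ℕ) : ℤ) := by positivity
  have hK : (0 : ℤ) ≤ K := by positivity
  push_cast
  constructor
  · nlinarith
  · have := mul_le_mul_of_nonneg_left h3 (by positivity : (0 : ℤ) ≤ 2 * K + 2)
    by_cases hb : (Q i).2 = true
    · rw [if_pos hb] at h2 ⊢
      nlinarith
    · rw [if_neg hb] at h2 ⊢
      nlinarith

lemma block_disj (d K m : ℕ) (j j' : Fin d → Fin m) (h : j ≠ j') :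
    Disjoint (block d K (ctr d K m j)) (block d K (ctr d K m j')) := by
  rw [Set.disjoint_left]
  intro Q hQ hQ'
  obtain ⟨i, hi⟩ := Function.ne_iff.1 h
  have a := (mem_box _).1 (mem_box_of_subset _ hQ) i
  have b := (mem_box _).1 (mem_box_of_subset _ hQ') i
  simp only [translateCube, ctr, Pi.neg_apply] at a b
  have hK : (0 : ℤ) ≤ K := by positivity
  have hi' : (j i : ℕ) ≠ (j' i : ℕ) := fun h => hi (Fin.ext h)
  rcases lt_or_gt_of_ne hi' with hlt | hlt
  · have : ((j i : ℕ) : ℤ) + 1 ≤ ((j' i : ℕ) : ℤ) := by exact_mod_cast hlt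
    have := mul_le_mul_of_nonneg_left this (by positivity : (0 : ℤ) ≤ 2 * K + 2)
    linarith
  · have : ((j' i : ℕ) : ℤ) + 1 ≤ ((j i : ℕ) : ℤ) := by exact_mod_cast hlt
    have := mul_le_mul_of_nonneg_left this (by positivity : (0 : ℤ) ≤ 2 * K + 2)
    linarith

lemma measurable_of_finset {d : ℕ} (t : ℝ) (F : Finset (ElemCube d))
    (f : Set (ElemCube d) → ℕ) :
    Measurable fun ω : Config d => f {Q | Q ∈ (F : Set (ElemCube d)) ∧ (ω Q : ℝ) ≤ t} := by
  have h1 : Measurable fun (ω : Config d) (Q : F) => (((ω Q : ℝ) ≤ t : Prop)) := by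
    refine measurable_pi_lambda _ fun Q => ?_
    apply measurableSet_setOfPred.1
    exact measurableSet_le (measurable_subtype_coe.comp (measurable_pi_apply _)) measurable_const
  have h2 : Measurable fun g : F → Prop => f {Q | ∃ h : Q ∈ F, g ⟨Q, h⟩} := measurable_of_finite _
  convert h2.comp h1 using 2 with ω
  congr 1
  ext Q
  simp

lemma measurable_betti_cubSetOn {d q : ℕ} (t : ℝ) (L : Set (ElemCube d)) (hL : L.Finite) :
    Measurable fun ω : Config d => betti d q (cubSetOn L ω t) := by
  have := measurable_of_finset t hL.toFinset (fun S => betti d q (⋃ Q ∈ S, cubeSet Q))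
  simpa [cubSetOn] using this

lemma measurable_bettiN {d q n : ℕ} (t : ℝ) : Measurable (bettiN d q n t) := by
  have := measurable_of_finset t (box d (n + 1))
    (fun S => betti d q ((⋃ Q ∈ S, cubeSet Q) ∩ lambda d n))
  convert this using 2 with ω
  unfold bettiN
  congr 1
  ext x
  simp only [cubSet, Set.mem_inter_iff, Set.mem_iUnion₂]
  constructor
  · rintro ⟨⟨Q, hQ, hx⟩, hn⟩
    refine ⟨⟨Q, ⟨?_, hQ⟩, hx⟩, hn⟩
    rw [Finset.mem_coe, mem_box]
    intro i
    obtain ⟨a1, a2⟩ := hx i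
    obtain ⟨b1, b2⟩ := hn i
    have c1 : -((n : ℝ) + 1) ≤ (Q i).1 := by
      split_ifs at a2 <;> linarith
    have c2 : ((Q i).1 : ℝ) ≤ (n : ℝ) + 1 := by linarith
    constructor
    · exact_mod_cast c1
    · exact_mod_cast c2
  · rintro ⟨⟨Q, hQ, hx⟩, hn⟩
    exact ⟨⟨Q, hQ.2, hx⟩, hn⟩

lemma measurable_good (d q K : ℕ) (t : ℝ) : MeasurableSet (goodConfigs d q K t) := by
  have : goodConfigs d q K t = ⋂ L : {L : Finset (ElemCube d) // cubesIn d K ⊆ (L : Set _)},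
      {ω | 1 + betti d q (cubSetOn ((L.1 : Set (ElemCube d)) \ cubesIn d K) ω t)
        ≤ betti d q (cubSetOn (L.1 : Set (ElemCube d)) ω t)} := by
    ext ω
    simp only [Set.mem_iInter]
    constructor
    · intro h L
      exact h L.1 L.1.finite_toSet L.2
    · intro h L hL hK
      have := h ⟨hL.toFinset, by simpa using hK⟩
      simpa using this
  rw [this]
  refine MeasurableSet.iInter fun L => ?_
  exact measurableSet_le
    (measurable_const.add (measurable_betti_cubSetOn t _ (L.1.finite_toSet.subset Set.sdiff_subset)))
    (measurable_betti_cubSetOn t _ L.1.finite_toSet)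

lemma measurable_shift {d : ℕ} (x : Fin d → ℤ) : Measurable (configShift x) :=
  measurable_pi_lambda _ fun _ => measurable_pi_apply _

lemma bettiN_le (d q n : ℕ) (t : ℝ) (ω : Config d) : bettiN d q n t ω ≤ (4 * n + 2) ^ d := by
  rw [← card_box]
  exact betti_le_card _ fun Q hQ => mem_box_of_subset Q (hQ.trans Set.inter_subset_right)

lemma expect_bound (d q : ℕ) (t : ℝ) (P : Measure (Config d)) [IsProbabilityMeasure P]
    (hstat : Stationary P) (K m n : ℕ) (hn : n + 1 = (K + 1) * m) :
    (m : ℝ) ^ d * (P (goodConfigs d q K t)).toReal ≤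
      ∫ ω, (bettiN d q (n + 1) t ω : ℝ) ∂P + ((4 * ((n : ℝ) + 1) + 2) ^ d - (4 * (n : ℝ) + 2) ^ d) := by
  classical
  set G := goodConfigs d q K t with hG
  have hGm : MeasurableSet G := measurable_good d q K t
  set E : ℝ := ((4 * ((n : ℝ) + 1) + 2) ^ d - (4 * (n : ℝ) + 2) ^ d) with hE
  have hAm : ∀ j : Fin d → Fin m, MeasurableSet (configShift (-ctr d K m j) ⁻¹' G) :=
    fun j => measurable_shift _ hGm
  have hint : Integrable (fun ω => (bettiN d q (n + 1) t ω : ℝ)) P := by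
    refine Integrable.of_bound (C := (((4 * (n + 1) + 2) ^ d : ℕ) : ℝ)) ?_ ?_
    · exact (measurable_from_top.comp (measurable_bettiN t)).aestronglyMeasurable
    · refine Filter.Eventually.of_forall fun ω => ?_
      rw [Real.norm_of_nonneg (by positivity)]
      exact_mod_cast bettiN_le d q (n + 1) t ω
  have hi : ∀ j : Fin d → Fin m, Integrable
      ((configShift (-ctr d K m j) ⁻¹' G).indicator (fun _ => (1 : ℝ))) P := fun j =>
    (integrable_const (1 : ℝ)).indicator (hAm j)
  have hL : ∫ ω, ∑ j : Fin d → Fin m,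
      (configShift (-ctr d K m j) ⁻¹' G).indicator (fun _ => (1 : ℝ)) ω ∂P
      = (m : ℝ) ^ d * (P G).toReal := by
    rw [integral_finsetSum _ fun j _ => hi j]
    have : ∀ j : Fin d → Fin m, ∫ ω, (configShift (-ctr d K m j) ⁻¹' G).indicator
        (fun _ => (1 : ℝ)) ω ∂P = (P G).toReal := by
      intro j
      rw [integral_indicator_const _ (hAm j), Measure.real, hstat _ _ hGm]
      simp
    rw [Finset.sum_congr rfl fun j _ => this j]
    simp
  have hR : ∫ ω, ((bettiN d q (n + 1) t ω : ℝ) + E) ∂P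
      = ∫ ω, (bettiN d q (n + 1) t ω : ℝ) ∂P + E := by
    rw [integral_add hint (integrable_const _)]
    simp
  rw [← hL, ← hR]
  refine integral_mono (integrable_finsetSum _ fun j _ => hi j)
    (hint.add (integrable_const _)) fun ω => ?_
  let J : Finset (Fin d → Fin m) :=
    Finset.univ.filter fun j => configShift (-ctr d K m j) ω ∈ G
  have hs : ∑ j : Fin d → Fin m,
      (configShift (-ctr d K m j) ⁻¹' G).indicator (fun _ => (1 : ℝ)) ω = J.card := by
    simp only [J, Set.indicator_apply, Set.mem_preimage, Finset.sum_boole]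
  have h1 := good_many (q := q) (K := K) (t := t) (ω := ω) (ctr d K m) (cubesIn d ((K + 1) * m))
    (cubesIn_finite _ _) (block_sub d K m) (block_disj d K m) J (by simp [J, hG])
  rw [← hn] at h1
  have h2 := betti_cubSetOn_le (q := q) (n := n) ω t
  have h3 : J.card ≤ bettiN d q (n + 1) t ω + ((4 * (n + 1) + 2) ^ d - (4 * n + 2) ^ d) := by
    omega
  have h4 : (4 * n + 2) ^ d ≤ (4 * (n + 1) + 2) ^ d := Nat.pow_le_pow_left (by omega) d
  have h5 : (J.card : ℝ) ≤ _ := Nat.cast_le.2 h3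
  rw [Nat.cast_add, Nat.cast_sub h4] at h5
  simp only [hs]
  push_cast at h5
  exact h5

lemma err_tendsto (d : ℕ) : Tendsto (fun n : ℕ =>
    ((2 * ((n : ℝ) + 1)) ^ d)⁻¹ * ((4 * ((n : ℝ) + 1) + 2) ^ d - (4 * (n : ℝ) + 2) ^ d))
    atTop (𝓝 0) := by
  have h := tendsto_one_div_add_atTop_nhds_zero_nat (𝕜 := ℝ)
  have h1 : Tendsto (fun n : ℕ => (2 + 1 / ((n : ℝ) + 1)) ^ d - (2 - 1 / ((n : ℝ) + 1)) ^ d)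
      atTop (𝓝 ((2 + 0) ^ d - (2 - 0) ^ d)) :=
    ((tendsto_const_nhds.add h).pow d).sub ((tendsto_const_nhds.sub h).pow d)
  rw [add_zero, sub_zero, sub_self] at h1
  refine h1.congr fun n => ?_
  have hp : (0 : ℝ) < (n : ℝ) + 1 := by positivity
  rw [mul_sub, ← inv_pow, ← mul_pow, ← mul_pow]
  congr 2 <;> field_simp <;> ring

/-- **positivity of the limiting Betti number.** Fix `0 ≤ q < d` and
`t ∈ [0,1]`, and let `P` be a stationary and ergodic probability measure on
`Ω = [0,1]^{K^d}`. If `P(Ω_q(0,K,t)) > 0` for some positive integer `K`, then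
`β̂_q(t) ≥ (2K+2)^{-d} P(Ω_q(0,K,t)) > 0`, where
`β̂_q(t) = limsup_{n→∞} |Λ_n|⁻¹ E[β_q^n(t)]`. -/
theorem betaHat_pos (d q : ℕ) (hq : q < d) (t : ℝ) (ht : t ∈ Set.Icc (0 : ℝ) 1)
    (P : Measure (Config d)) [IsProbabilityMeasure P]
    (hstat : Stationary P) (herg : ErgodicConfig P)
    (K : ℕ) (hK : 1 ≤ K) (hpos : 0 < P (goodConfigs d q K t)) :
    ((2 * (K : ℝ) + 2) ^ d)⁻¹ * (P (goodConfigs d q K t)).toReal ≤ betaHat d q P t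
      ∧ 0 < betaHat d q P t := by
  have main : ((2 * (K : ℝ) + 2) ^ d)⁻¹ * (P (goodConfigs d q K t)).toReal ≤ betaHat d q P t := by
    have hbdd : IsBoundedUnder (· ≤ ·) atTop
        (fun n : ℕ => ((2 * (n : ℝ)) ^ d)⁻¹ * ∫ ω, (bettiN d q n t ω : ℝ) ∂P) := by
      refine isBoundedUnder_of ⟨3 ^ d, fun n => ?_⟩
      rcases Nat.eq_zero_or_pos n with rfl | hn
      · have : d ≠ 0 := by omega
        simp [this]
      · have hn' : (1 : ℝ) ≤ n := by exact_mod_cast hn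
        have h1 : ∫ ω, (bettiN d q n t ω : ℝ) ∂P ≤ (4 * (n : ℝ) + 2) ^ d := by
          have h := integral_mono_of_nonneg (μ := P) (f := fun ω => (bettiN d q n t ω : ℝ))
            (g := fun _ => (4 * (n : ℝ) + 2) ^ d)
            (Eventually.of_forall fun ω => by positivity) (integrable_const _)
            (Eventually.of_forall fun ω => by
              have := bettiN_le d q n t ω
              simp only []
              exact_mod_cast this)
          simpa using h
        rw [inv_mul_le_iff₀ (by positivity), ← mul_pow]
        exact h1.trans (pow_le_pow_left₀ (by positivity) (by linarith) d)
    refine le_of_forall_pos_sub_le fun ε hε => ?_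
    refine le_limsup_of_frequently_le ?_ hbdd
    have hev := (err_tendsto d).eventually (gt_mem_nhds hε)
    obtain ⟨N, hN⟩ := eventually_atTop.1 hev
    rw [frequently_atTop]
    intro a
    obtain ⟨n, hn⟩ : ∃ n, n + 1 = (K + 1) * (N + a + 1) :=
      ⟨(K + 1) * (N + a + 1) - 1, Nat.sub_add_cancel (Nat.succ_le_of_lt (by positivity))⟩
    have hna : N + a ≤ n := by nlinarith
    refine ⟨n + 1, by omega, ?_⟩
    have h1 := expect_bound d q t P hstat K (N + a + 1) n hn
    have h2 := hN n (by omega)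
    have hc : (2 * ((n : ℝ) + 1)) = (2 * (K : ℝ) + 2) * ((N + a + 1 : ℕ) : ℝ) := by
      have : ((n + 1 : ℕ) : ℝ) = (((K + 1) * (N + a + 1) : ℕ) : ℝ) := by rw [hn]
      push_cast at this ⊢
      rw [this]; ring
    have h3 := mul_le_mul_of_nonneg_left h1
      (by positivity : (0 : ℝ) ≤ ((2 * ((n : ℝ) + 1)) ^ d)⁻¹)
    have h4 : ((2 * ((n : ℝ) + 1)) ^ d)⁻¹ * (((N + a + 1 : ℕ) : ℝ) ^ d
        * (P (goodConfigs d q K t)).toReal)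
        = ((2 * (K : ℝ) + 2) ^ d)⁻¹ * (P (goodConfigs d q K t)).toReal := by
      have h0 : (((N + a + 1 : ℕ) : ℝ) ^ d) ≠ 0 := by positivity
      rw [hc, mul_pow, mul_inv, mul_assoc, inv_mul_cancel_left₀ h0]
    rw [h4, mul_add (((2 * ((n : ℝ) + 1)) ^ d)⁻¹)] at h3
    rw [Nat.cast_add, Nat.cast_one]
    linarith
  refine ⟨main, lt_of_lt_of_le ?_ main⟩
  have := ENNReal.toReal_pos hpos.ne' (measure_ne_top P _)
  positivity

end
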